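/- Let X = ℓ∞³, Y = ℓ₁³, and let T : X → Y be a bounded linear operator with ‖T‖ = 1 such that M_T ∩ Ext(B_X) = {±x₁, ±x₂, ±x₃, ±x₄}. Suppose |S₁| = 6, |S₂| = 0 and |S₃| = 2. If ±J(Tx_i) = ±J(Tx_j) for all x_i, x_j ∈ S₁, then T is 5-smooth, i.e., dim span J(T) = 5. -/

import Mathlib

open Metric Set Module Pointwise

noncomputable section

/-- `J x` is the set of supporting functionals of `x`. -/
def suppFunctionals {E : Type*} [NormedAddCommGroup E] [NormedSpace ℝ E] (x : E) :
    Set (E →L[ℝ] ℝ) := {f | ‖f‖ = 1 ∧ f x = 1}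

/-- ℓ∞³ : ℝ³ with the max norm. -/
abbrev Linf3 := Fin 3 → ℝ

/-- ℓ₁³ : ℝ³ with the ℓ¹ norm. -/
abbrev L13 := PiLp 1 (fun _ : Fin 3 => ℝ)

def x₁ : Linf3 := ![1, 1, 1]
def x₂ : Linf3 := ![-1, 1, 1]
def x₃ : Linf3 := ![-1, -1, 1]
def x₄ : Linf3 := ![1, -1, 1]

/-- `M_T ∩ Ext(B_X)`: the norm-attainment set of `T` intersected with the
extreme points of the closed unit ball. -/
def MTExt (T : Linf3 →L[ℝ] L13) : Set Linf3 :=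
  {x ∈ sphere (0 : Linf3) 1 | ‖T x‖ = ‖T‖} ∩ extremePoints ℝ (closedBall (0 : Linf3) 1)

/-- `Sk T k` is the set `S_k` of points `x` of `M_T ∩ Ext(B_X)` such that `T x` is
`k`-smooth. -/
def Sk (T : Linf3 →L[ℝ] L13) (k : ℕ) : Set Linf3 :=
  {x ∈ MTExt T | finrank ℝ (Submodule.span ℝ (suppFunctionals (T x))) = k}

/-- `±A`, i.e. `A ∪ (-A)`. -/
def pm {E : Type*} [NormedAddCommGroup E] [NormedSpace ℝ E] (A : Set (E →L[ℝ] ℝ)) :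
    Set (E →L[ℝ] ℝ) := A ∪ (-A)

/-!
Write `g ⊗ u` for the functional `A ↦ g (A u)`. Every `F ∈ J(T)` is a linear combination of the
functionals `g ⊗ u` with `u` a vertex of the unit ball and `g ∈ J(T u)`: if `A` is killed by all of
these then, `ℓ₁` being polyhedral, `‖T u + t A u‖ ≤ 1` at every vertex for all small `t` of either
sign, so `‖T + t A‖ ≤ 1`, and `F (T + t A)` can only have a maximum at `t = 0` if `F A = 0`.
If `J(T u)` spans one and the same line `ℝ f` at all vertices except `± p`, those vertices span `X`
and `J(T p)` spans `Y*`, then the span of `J(T)` is `(f ⊗ X) + (Y* ⊗ p)`. The two summands meet in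
the line `ℝ (f ⊗ p)`, so its dimension is `dim X + dim Y - 1`.
-/

open Filter Topology

section SupportingFunctionals

variable {E : Type*} [NormedAddCommGroup E] [NormedSpace ℝ E] {x z : E} {f : E →L[ℝ] ℝ}

lemma mem_suppFunctionals_of_norm_le_one (hx : ‖x‖ ≤ 1) (hf : ‖f‖ ≤ 1) (hfx : f x = 1) :
    f ∈ suppFunctionals x := by
  refine ⟨hf.antisymm ?_, hfx⟩
  calc (1 : ℝ) = ‖f x‖ := by rw [hfx, norm_one]
    _ ≤ ‖f‖ * ‖x‖ := f.le_opNorm x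
    _ ≤ ‖f‖ := mul_le_of_le_one_right (norm_nonneg f) hx

lemma suppFunctionals_neg (x : E) : suppFunctionals (-x) = -suppFunctionals x := by
  ext f
  simp [suppFunctionals]

lemma span_pm (A : Set (E →L[ℝ] ℝ)) : Submodule.span ℝ (pm A) = Submodule.span ℝ A := by
  rw [pm, Submodule.span_union, Submodule.span_neg, sup_idem]

lemma apply_eq_zero_of_eventually_norm_add_smul_le_one (hf : f ∈ suppFunctionals x)
    (hz : ∀ᶠ t : ℝ in 𝓝 0, ‖x + t • z‖ ≤ 1) : f z = 0 := by
  have hmax : IsLocalMax (fun t : ℝ ↦ f x + t * f z) 0 := by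
    filter_upwards [hz] with t ht
    calc f x + t * f z = f (x + t • z) := by simp
      _ ≤ ‖f‖ * ‖x + t • z‖ := (le_abs_self _).trans (f.le_opNorm _)
      _ ≤ f x + 0 * f z := by rw [hf.1, hf.2]; simpa using ht
  have hderiv : HasDerivAt (fun t : ℝ ↦ f x + t * f z) (f z) 0 := by
    simpa using ((hasDerivAt_id (0 : ℝ)).mul_const (f z)).const_add (f x)
  exact hmax.hasDerivAt_eq_zero hderiv

lemma mem_of_forall_apply_eq_zero {W : Submodule ℝ (E →L[ℝ] ℝ)} [FiniteDimensional ℝ W]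
    (h : ∀ v, (∀ g ∈ W, g v = 0) → f v = 0) : f ∈ W := by
  let toDual : (E →L[ℝ] ℝ) →ₗ[ℝ] Dual ℝ E := ContinuousLinearMap.coeLM ℝ
  have hmem : toDual f ∈ (W.map toDual).dualCoannihilator.dualAnnihilator := by
    rw [Submodule.mem_dualAnnihilator]
    intro v hv
    rw [Submodule.mem_dualCoannihilator] at hv
    exact h v fun g hg ↦ hv _ (Submodule.mem_map_of_mem hg)
  rw [Subspace.dualCoannihilator_dualAnnihilator_eq] at hmem
  obtain ⟨g, hg, hgf⟩ := hmem
  rwa [← ContinuousLinearMap.coe_injective hgf]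

end SupportingFunctionals

section LOne

variable {κ : Type*} [Fintype κ]

lemma sum_smul_proj_mem_suppFunctionals {y : PiLp 1 fun _ : κ ↦ ℝ} {c : κ → ℝ} (hy : ‖y‖ = 1)
    (hc : ∀ j, |c j| ≤ 1) (hcy : ∀ j, c j * y j = |y j|) :
    ∑ j, c j • PiLp.proj 1 (fun _ : κ ↦ ℝ) j ∈ suppFunctionals y := by
  refine mem_suppFunctionals_of_norm_le_one hy.le
    (ContinuousLinearMap.opNorm_le_bound _ zero_le_one fun x ↦ ?_) ?_
  · calc ‖(∑ j, c j • PiLp.proj 1 (fun _ : κ ↦ ℝ) j) x‖ = |∑ j, c j * x j| := by simp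
      _ ≤ ∑ j, |c j * x j| := Finset.abs_sum_le_sum_abs _ _
      _ ≤ ∑ j, |x j| := Finset.sum_le_sum fun j _ ↦ by
        rw [abs_mul]
        exact mul_le_of_le_one_left (abs_nonneg _) (hc j)
      _ = 1 * ‖x‖ := by simp [PiLp.norm_eq_of_L1]
  · simp [hcy, ← hy, PiLp.norm_eq_of_L1]

lemma abs_sign_le_one (a : ℝ) : |(SignType.sign a : ℝ)| ≤ 1 := by
  rcases lt_trichotomy a 0 with h | h | h <;> simp [h]

variable {y z : PiLp 1 fun _ : κ ↦ ℝ}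

lemma sum_sign_mul_eq_zero (hy : ‖y‖ = 1) (hz : ∀ g ∈ suppFunctionals y, g z = 0) :
    ∑ j, (SignType.sign (y j) : ℝ) * z j = 0 := by
  simpa using hz _ <| sum_smul_proj_mem_suppFunctionals hy
    (fun j ↦ abs_sign_le_one (y j)) fun j ↦ sign_mul_self (y j)

-- At a zero coordinate of `y`, a supporting functional may take any coefficient in `[-1, 1]`.
lemma apply_eq_zero_of_suppFunctionals (hy : ‖y‖ = 1) (hz : ∀ g ∈ suppFunctionals y, g z = 0)
    {k : κ} (hk : y k = 0) : z k = 0 := by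
  classical
  let c : κ → ℝ := fun j ↦ SignType.sign (y j) + if j = k then 1 else 0
  have hc : ∀ j, |c j| ≤ 1 := by
    intro j
    by_cases hj : j = k
    · simp [c, hj, hk]
    · simpa [c, hj] using abs_sign_le_one (y j)
  have hcy : ∀ j, c j * y j = |y j| := by
    intro j
    by_cases hj : j = k
    · simp [hj, hk]
    · simp [c, hj]
  have hcz := hz _ (sum_smul_proj_mem_suppFunctionals hy hc hcy)
  simpa [c, add_mul, Finset.sum_add_distrib, sum_sign_mul_eq_zero hy hz] using hcz

lemma eventually_abs_add_mul_eq {a b : ℝ} (hab : a = 0 → b = 0) :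
    ∀ᶠ t : ℝ in 𝓝 0, |a + t * b| = |a| + t * (SignType.sign a * b) := by
  have hlim : Tendsto (fun t : ℝ ↦ a + t * b) (𝓝 0) (𝓝 a) :=
    Continuous.tendsto' (by fun_prop) _ _ (by simp)
  rcases lt_trichotomy a 0 with ha | ha | ha
  · filter_upwards [hlim.eventually_lt_const ha] with t ht
    simp only [abs_of_neg ht, abs_of_neg ha, sign_neg ha, SignType.coe_neg_one]
    ring
  · simp [ha, hab ha]
  · filter_upwards [hlim.eventually_const_lt ha] with t ht
    simp only [abs_of_pos ht, abs_of_pos ha, sign_pos ha, SignType.coe_one]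
    ring

lemma eventually_norm_add_smul_le_one (hy : ‖y‖ ≤ 1) (hz : ∀ g ∈ suppFunctionals y, g z = 0) :
    ∀ᶠ t : ℝ in 𝓝 0, ‖y + t • z‖ ≤ 1 := by
  rcases hy.lt_or_eq with hy | hy
  · have hlim : Tendsto (fun t : ℝ ↦ ‖y + t • z‖) (𝓝 0) (𝓝 ‖y‖) :=
      Continuous.tendsto' (by fun_prop) _ _ (by simp)
    exact hlim.eventually_le_const hy
  · have hcoord : ∀ᶠ t : ℝ in 𝓝 0, ∀ j,
        |y j + t * z j| = |y j| + t * (SignType.sign (y j) * z j) :=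
      eventually_all.2 fun j ↦ eventually_abs_add_mul_eq (apply_eq_zero_of_suppFunctionals hy hz)
    filter_upwards [hcoord] with t ht
    refine le_of_eq ?_
    calc ‖y + t • z‖ = ∑ j, |y j + t * z j| := by simp [PiLp.norm_eq_of_L1]
      _ = ∑ j, |y j| + t * ∑ j, SignType.sign (y j) * z j := by
        simp only [ht, Finset.sum_add_distrib, Finset.mul_sum]
      _ = ‖y‖ := by simp [sum_sign_mul_eq_zero hy hz, PiLp.norm_eq_of_L1]
      _ = 1 := hy

end LOne

section PointFunctional

variable {X Y : Type*} [NormedAddCommGroup X] [NormedSpace ℝ X] [NormedAddCommGroup Y]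
  [NormedSpace ℝ Y]

/-- The functional `A ↦ g (A x)` on operators, usually written `g ⊗ x`, as a bilinear map of
`x` and `g`. -/
def pointFunctional : X →ₗ[ℝ] (Y →L[ℝ] ℝ) →ₗ[ℝ] ((X →L[ℝ] Y) →L[ℝ] ℝ) :=
  LinearMap.mk₂ ℝ (fun x g ↦ g.comp (ContinuousLinearMap.apply ℝ Y x))
    (fun x x' g ↦ by ext; simp) (fun c x g ↦ by ext; simp)
    (fun x g g' ↦ by ext; simp) (fun c x g ↦ by ext; simp)

@[simp]
lemma pointFunctional_apply (x : X) (g : Y →L[ℝ] ℝ) (A : X →L[ℝ] Y) :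
    pointFunctional x g A = g (A x) := rfl

lemma pointFunctional_mem_suppFunctionals {T : X →L[ℝ] Y} (hT : ‖T‖ = 1) {x : X} (hx : ‖x‖ ≤ 1)
    {g : Y →L[ℝ] ℝ} (hg : g ∈ suppFunctionals (T x)) :
    pointFunctional x g ∈ suppFunctionals T := by
  refine mem_suppFunctionals_of_norm_le_one hT.le
    (ContinuousLinearMap.opNorm_le_bound _ zero_le_one fun A ↦ ?_) hg.2
  calc ‖g (A x)‖ ≤ ‖g‖ * ‖A x‖ := g.le_opNorm _
    _ = ‖A x‖ := by rw [hg.1, one_mul]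
    _ ≤ 1 * ‖A‖ := by rw [one_mul]; exact A.unit_le_opNorm x hx

lemma pointFunctional_injective {x : X} (hx : x ≠ 0) :
    Function.Injective (pointFunctional (Y := Y) x) := by
  obtain ⟨φ, hφ⟩ := SeparatingDual.exists_eq_one (R := ℝ) hx
  intro g g' h
  ext y
  simpa [hφ] using DFunLike.congr_fun h (φ.smulRight y)

lemma pointFunctional_flip_injective {g : Y →L[ℝ] ℝ} (hg : g ≠ 0) :
    Function.Injective (pointFunctional (X := X).flip g) := by
  obtain ⟨y, hy⟩ := DFunLike.ne_iff.1 hg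
  intro x x' h
  refine (SeparatingDual.eq_iff_forall_dual_eq (R := ℝ)).2 fun φ ↦ ?_
  simpa [show g y ≠ 0 from hy] using DFunLike.congr_fun h (φ.smulRight y)

lemma range_pointFunctional_flip_inf_range {x : X} (hx : x ≠ 0) (g : Y →L[ℝ] ℝ) :
    LinearMap.range (pointFunctional.flip g) ⊓ LinearMap.range (pointFunctional x) =
      ℝ ∙ pointFunctional x g := by
  apply le_antisymm
  · rintro _ ⟨⟨x', rfl⟩, g', h⟩
    obtain ⟨φ, hφ⟩ := SeparatingDual.exists_eq_one (R := ℝ) hx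
    have hg' : g' = φ x' • g := by
      ext y
      simpa [hφ] using DFunLike.congr_fun h (φ.smulRight y)
    rw [← h, hg', map_smul]
    exact Submodule.smul_mem _ _ (Submodule.mem_span_singleton_self _)
  · rw [Submodule.span_singleton_le_iff_mem]
    exact ⟨⟨x, rfl⟩, g, rfl⟩

lemma finrank_range_pointFunctional_sup_add_one [FiniteDimensional ℝ X] [FiniteDimensional ℝ Y]
    {x : X} (hx : x ≠ 0) {g : Y →L[ℝ] ℝ} (hg : g ≠ 0) :
    finrank ℝ ↥(LinearMap.range (pointFunctional.flip g) ⊔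
        LinearMap.range (pointFunctional x)) + 1 = finrank ℝ X + finrank ℝ (Y →L[ℝ] ℝ) := by
  have hne : pointFunctional x g ≠ 0 := fun h ↦
    hg (pointFunctional_injective hx (h.trans (map_zero _).symm))
  have hdim := Submodule.finrank_sup_add_finrank_inf_eq
    (LinearMap.range (pointFunctional.flip g)) (LinearMap.range (pointFunctional x))
  rwa [range_pointFunctional_flip_inf_range hx, finrank_span_singleton hne,
    LinearMap.finrank_range_of_inj (pointFunctional_flip_injective hg),
    LinearMap.finrank_range_of_inj (pointFunctional_injective hx)] at hdim

lemma opNorm_le_one_of_convexHull_eq_closedBall {U : Set X}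
    (hU : convexHull ℝ U = closedBall 0 1) {A : X →L[ℝ] Y} (hA : ∀ u ∈ U, ‖A u‖ ≤ 1) :
    ‖A‖ ≤ 1 := by
  have hconvex : Convex ℝ (A ⁻¹' closedBall 0 1) :=
    (convex_closedBall (0 : Y) 1).linear_preimage A.toLinearMap
  have hball : closedBall (0 : X) 1 ⊆ A ⁻¹' closedBall 0 1 :=
    hU ▸ convexHull_min (fun u hu ↦ by simpa using hA u hu) hconvex
  refine ContinuousLinearMap.opNorm_le_of_unit_norm zero_le_one fun x hx ↦ ?_
  simpa using hball (by simpa using hx.le : x ∈ closedBall (0 : X) 1)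

end PointFunctional

section OperatorsIntoLOne

variable {X κ : Type*} [NormedAddCommGroup X] [NormedSpace ℝ X] [Fintype κ]
  {T : X →L[ℝ] PiLp 1 fun _ : κ ↦ ℝ}

theorem span_suppFunctionals_eq_iSup (hT : ‖T‖ = 1) {U : Set X} [Finite U]
    (hU : convexHull ℝ U = closedBall 0 1) :
    Submodule.span ℝ (suppFunctionals T) =
      ⨆ u : U, (Submodule.span ℝ (suppFunctionals (T u))).map (pointFunctional (u : X)) := by
  have hnorm : ∀ u : U, ‖(u : X)‖ ≤ 1 := fun u ↦
    mem_closedBall_zero_iff.1 (hU ▸ subset_convexHull ℝ U u.2)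
  apply le_antisymm
  · rw [Submodule.span_le]
    refine fun F hF ↦ mem_of_forall_apply_eq_zero fun A hA ↦
      apply_eq_zero_of_eventually_norm_add_smul_le_one hF ?_
    have hvertex : ∀ᶠ t : ℝ in 𝓝 0, ∀ u : U, ‖T u + t • A u‖ ≤ 1 := by
      refine eventually_all.2 fun u ↦ eventually_norm_add_smul_le_one ?_ fun g hg ↦ ?_
      · exact hT ▸ T.unit_le_opNorm u (hnorm u)
      · exact hA _ (Submodule.mem_iSup_of_mem u
          (Submodule.mem_map_of_mem (Submodule.subset_span hg)))
    filter_upwards [hvertex] with t ht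
    exact opNorm_le_one_of_convexHull_eq_closedBall hU fun u hu ↦ ht ⟨u, hu⟩
  · refine iSup_le fun u ↦ ?_
    rw [Submodule.map_span, Submodule.span_le]
    rintro _ ⟨g, hg, rfl⟩
    exact Submodule.subset_span (pointFunctional_mem_suppFunctionals hT (hnorm u) hg)

theorem span_suppFunctionals_eq_sup (hT : ‖T‖ = 1) {S : Set X} (hS : S.Finite) {p : X}
    (hball : convexHull ℝ (S ∪ {p, -p}) = closedBall 0 1) (hspan : Submodule.span ℝ S = ⊤)
    {f : (PiLp 1 fun _ : κ ↦ ℝ) →L[ℝ] ℝ}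
    (hJS : ∀ u ∈ S, Submodule.span ℝ (suppFunctionals (T u)) = ℝ ∙ f)
    (hJp : Submodule.span ℝ (suppFunctionals (T p)) = ⊤) :
    Submodule.span ℝ (suppFunctionals T) =
      LinearMap.range (pointFunctional.flip f) ⊔ LinearMap.range (pointFunctional p) := by
  have : Finite ↥(S ∪ {p, -p}) := hS.union (Set.toFinite _)
  rw [span_suppFunctionals_eq_iSup hT hball]
  apply le_antisymm
  · refine iSup_le ?_
    rintro ⟨u, hu | rfl | rfl⟩
    · rw [hJS u hu, Submodule.map_span, Set.image_singleton]
      exact le_sup_of_le_left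
        ((Submodule.span_singleton_le_iff_mem _ _).2 (LinearMap.mem_range_self _ u))
    · exact le_sup_of_le_right LinearMap.map_le_range
    · rw [map_neg, Submodule.map_neg]
      exact le_sup_of_le_right LinearMap.map_le_range
  · apply sup_le
    · rw [← Submodule.map_top, ← hspan, Submodule.map_span, Submodule.span_le]
      rintro _ ⟨u, hu, rfl⟩
      refine Submodule.mem_iSup_of_mem ⟨u, .inl hu⟩ (Submodule.mem_map_of_mem ?_)
      exact hJS u hu ▸ Submodule.mem_span_singleton_self f
    · rw [← Submodule.map_top, ← hJp]
      exact le_iSup_of_le ⟨p, .inr (.inl rfl)⟩ le_rfl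

lemma finrank_dual_piLp (κ : Type*) [Fintype κ] :
    finrank ℝ ((PiLp 1 fun _ : κ ↦ ℝ) →L[ℝ] ℝ) = Fintype.card κ := by
  rw [← (LinearMap.toContinuousLinearMap (𝕜 := ℝ)).finrank_eq, Subspace.dual_finrank_eq,
    (WithLp.linearEquiv 1 ℝ (κ → ℝ)).finrank_eq, finrank_fintype_fun_eq_card]

theorem finrank_span_suppFunctionals_add_one (hT : ‖T‖ = 1) {S : Set X} (hS : S.Finite) {p : X}
    (hball : convexHull ℝ (S ∪ {p, -p}) = closedBall 0 1) (hspan : Submodule.span ℝ S = ⊤)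
    {f : (PiLp 1 fun _ : κ ↦ ℝ) →L[ℝ] ℝ} (hf : f ≠ 0)
    (hJS : ∀ u ∈ S, Submodule.span ℝ (suppFunctionals (T u)) = ℝ ∙ f)
    (hJp : Submodule.span ℝ (suppFunctionals (T p)) = ⊤) :
    finrank ℝ (Submodule.span ℝ (suppFunctionals T)) + 1 = finrank ℝ X + Fintype.card κ := by
  have : FiniteDimensional ℝ X := ⟨hspan ▸ Submodule.fg_span hS⟩
  have hp : p ≠ 0 := by
    rintro rfl
    have hf' : f ∈ Submodule.span ℝ (suppFunctionals (T 0)) := hJp ▸ Submodule.mem_top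
    simp [suppFunctionals, hf] at hf'
  rw [span_suppFunctionals_eq_sup hT hS hball hspan hJS hJp,
    finrank_range_pointFunctional_sup_add_one hp hf, finrank_dual_piLp]

end OperatorsIntoLOne

section CubeVertices

variable {ι : Type*}

/-- The points of `ℝ^ι` with all coordinates `±1`: the extreme points of the unit ball of the
maximum norm. -/
def cubeVertices (ι : Type*) : Set (ι → ℝ) := univ.pi fun _ ↦ {-1, 1}

lemma mem_cubeVertices {x : ι → ℝ} : x ∈ cubeVertices ι ↔ ∀ i, x i = -1 ∨ x i = 1 := by
  simp [cubeVertices]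

lemma zero_notMem_cubeVertices [Nonempty ι] : 0 ∉ cubeVertices ι := by
  simp [mem_cubeVertices]

lemma neg_mem_cubeVertices {x : ι → ℝ} (hx : x ∈ cubeVertices ι) : -x ∈ cubeVertices ι := by
  rw [mem_cubeVertices] at hx ⊢
  intro i
  rcases hx i with h | h <;> simp [h]

lemma finite_cubeVertices [Finite ι] : (cubeVertices ι).Finite :=
  Set.Finite.pi fun _ ↦ Set.toFinite _

lemma update_neg_mem_cubeVertices [DecidableEq ι] {x : ι → ℝ} (hx : x ∈ cubeVertices ι) (i : ι) :
    Function.update x i (-x i) ∈ cubeVertices ι := by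
  rw [mem_cubeVertices] at hx ⊢
  intro j
  by_cases hj : j = i
  · subst hj
    rcases hx j with h | h <;> simp [h]
  · simpa [hj] using hx j

-- Flip the sign of one coordinate `a` of `p`, and then also that of `j`: with a third coordinate
-- left unchanged, neither vertex is `± p`, and they differ by a multiple of the basis vector `e_j`.
lemma single_mem_span_cubeVertices_diff [DecidableEq ι] {p : ι → ℝ} (hp : p ∈ cubeVertices ι)
    {a b j : ι} (haj : a ≠ j) (hba : b ≠ a) (hbj : b ≠ j) :
    Pi.single j 1 ∈ Submodule.span ℝ (cubeVertices ι \ {p, -p}) := by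
  have hp0 : ∀ i, p i ≠ 0 := fun i h ↦ by simpa [h] using mem_cubeVertices.1 hp i
  let v := Function.update p a (-p a)
  let w := Function.update v j (-v j)
  have hv : v ∈ cubeVertices ι := update_neg_mem_cubeVertices hp a
  have hne : ∀ x : ι → ℝ, x a = -p a → x b = p b → x ∉ ({p, -p} : Set (ι → ℝ)) := by
    rintro x hxa hxb (rfl | rfl)
    · exact hp0 a (self_eq_neg.1 hxa)
    · exact hp0 b (neg_eq_self.1 hxb)
  have hv' : v ∈ cubeVertices ι \ {p, -p} := ⟨hv, hne v (by simp [v]) (by simp [v, hba])⟩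
  have hw' : w ∈ cubeVertices ι \ {p, -p} :=
    ⟨update_neg_mem_cubeVertices hv j, hne w (by simp [w, v, haj]) (by simp [w, v, hba, hbj])⟩
  have hsingle : Pi.single j 1 = (2 * p j)⁻¹ • (v - w) := by
    have hvj : v j = p j := by simp [v, haj.symm]
    have hdiff : v - w = Pi.single j (2 * p j) := by
      ext i
      by_cases hi : i = j
      · subst hi
        simp [w, hvj, two_mul]
      · simp [w, hi]
    rw [hdiff, ← Pi.single_smul, smul_eq_mul, inv_mul_cancel₀ (mul_ne_zero two_ne_zero (hp0 j))]
  rw [hsingle]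
  exact Submodule.smul_mem _ _
    (Submodule.sub_mem _ (Submodule.subset_span hv') (Submodule.subset_span hw'))

lemma cubeVertices_fin_three : cubeVertices (Fin 3) = {x₁, -x₁, x₂, -x₂, x₃, -x₃, x₄, -x₄} := by
  ext x
  simp only [mem_cubeVertices, Fin.forall_fin_succ, mem_insert_iff, mem_singleton_iff, funext_iff]
  simp only [x₁, x₂, x₃, x₄, Pi.neg_apply, neg_neg, Fin.succ_zero_eq_one, Fin.succ_one_eq_two,
    Matrix.cons_val, Matrix.cons_val_zero, Matrix.cons_val_one, IsEmpty.forall_iff, and_true]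
  tauto

variable [Fintype ι]

lemma convexHull_cubeVertices : convexHull ℝ (cubeVertices ι) = closedBall 0 1 := by
  rw [cubeVertices, convexHull_pi, closedBall_pi _ zero_le_one]
  refine Set.pi_congr rfl fun i _ ↦ ?_
  rw [convexHull_pair, segment_eq_Icc (by norm_num), Real.closedBall_eq_Icc]
  norm_num

lemma encard_cubeVertices : (cubeVertices ι).encard = 2 ^ Fintype.card ι := by
  classical
  have hcoe : cubeVertices ι = Fintype.piFinset fun _ : ι ↦ ({-1, 1} : Finset ℝ) := by
    simp [cubeVertices]
  have hpair : ({-1, 1} : Finset ℝ).card = 2 := Finset.card_pair (by norm_num)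
  rw [hcoe, encard_coe_eq_coe_finsetCard, Fintype.card_piFinset, hpair]
  simp

lemma span_cubeVertices_diff_eq_top (hι : 2 < Fintype.card ι) {p : ι → ℝ}
    (hp : p ∈ cubeVertices ι) : Submodule.span ℝ (cubeVertices ι \ {p, -p}) = ⊤ := by
  classical
  rw [eq_top_iff, ← (Pi.basisFun ℝ ι).span_eq, Submodule.span_le]
  rintro _ ⟨j, rfl⟩
  obtain ⟨a, -, haj⟩ := Finset.exists_mem_ne (s := Finset.univ) (by simpa using (by omega)) j
  obtain ⟨b, -, hb⟩ := Finset.exists_mem_notMem_of_card_lt_card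
    (s := {a, j}) (t := Finset.univ) (Finset.card_le_two.trans_lt hι)
  simp only [Finset.mem_insert, Finset.mem_singleton, not_or] at hb
  rw [Pi.basisFun_apply]
  exact single_mem_span_cubeVertices_diff hp haj hb.1 hb.2

end CubeVertices

lemma exists_eq_pair_neg_of_encard_eq_two {E : Type*} [AddCommGroup E] [IsAddTorsionFree E]
    {S : Set E} (hS : S.encard = 2) (hneg : ∀ x ∈ S, -x ∈ S) (h0 : 0 ∉ S) :
    ∃ p ∈ S, S = {p, -p} := by
  obtain ⟨p, q, -, rfl⟩ := encard_eq_two.1 hS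
  have hp : p ≠ 0 := fun h ↦ h0 (by simp [h])
  rcases hneg p (by simp) with h | h
  · exact absurd (neg_eq_self.1 h) hp
  · exact ⟨p, by simp, by rw [h]⟩

section SmoothVertices

variable {ι κ : Type*} [Fintype κ] {T : (ι → ℝ) →L[ℝ] PiLp 1 fun _ : κ ↦ ℝ}

/-- The vertices `x` of the unit ball of the maximum norm at which `T x` is `k`-smooth. For
`‖T‖ = 1` and `k ≠ 0` this is the set `S_k`, since `J (T x)` is empty when `‖T x‖ < 1`. -/
def smoothVertices (T : (ι → ℝ) →L[ℝ] PiLp 1 fun _ : κ ↦ ℝ) (k : ℕ) : Set (ι → ℝ) :=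
  {x ∈ cubeVertices ι | finrank ℝ (Submodule.span ℝ (suppFunctionals (T x))) = k}

lemma neg_mem_smoothVertices {k : ℕ} {x : ι → ℝ} (hx : x ∈ smoothVertices T k) :
    -x ∈ smoothVertices T k :=
  ⟨neg_mem_cubeVertices hx.1, by rw [map_neg, suppFunctionals_neg, Submodule.span_neg, hx.2]⟩

lemma disjoint_smoothVertices {k l : ℕ} (hkl : k ≠ l) :
    Disjoint (smoothVertices T k) (smoothVertices T l) :=
  disjoint_left.2 fun _ hk hl ↦ hkl (hk.2.symm.trans hl.2)

lemma smoothVertices_union_eq_cubeVertices [Fintype ι] {k l : ℕ} (hkl : k ≠ l)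
    (hcard : (smoothVertices T k).encard + (smoothVertices T l).encard = 2 ^ Fintype.card ι) :
    smoothVertices T k ∪ smoothVertices T l = cubeVertices ι := by
  refine finite_cubeVertices.eq_of_subset_of_encard_le'
    (union_subset (sep_subset _ _) (sep_subset _ _)) ?_
  rw [encard_union_eq (disjoint_smoothVertices hkl), hcard, encard_cubeVertices]

lemma exists_forall_span_suppFunctionals_eq_span_singleton (hne : (smoothVertices T 1).Nonempty)
    (hJ : ∀ x ∈ smoothVertices T 1, ∀ x' ∈ smoothVertices T 1,
      pm (suppFunctionals (T x)) = pm (suppFunctionals (T x'))) :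
    ∃ f ≠ 0, ∀ x ∈ smoothVertices T 1,
      Submodule.span ℝ (suppFunctionals (T x)) = ℝ ∙ f := by
  obtain ⟨x₀, hx₀⟩ := hne
  have hbot : Submodule.span ℝ (suppFunctionals (T x₀)) ≠ ⊥ :=
    Submodule.one_le_finrank_iff.1 hx₀.2.ge
  obtain ⟨f, hf, hf0⟩ := Submodule.exists_mem_ne_zero_of_ne_bot hbot
  refine ⟨f, hf0, fun x hx ↦ ?_⟩
  rw [← span_pm, hJ x hx x₀ hx₀, span_pm]
  exact eq_span_singleton_of_mem_of_finrank_eq_one hx₀.2 hf hf0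

end SmoothVertices

theorem stmt_17_general {ι κ : Type*} [Fintype ι] [Fintype κ] (hι : 2 < Fintype.card ι)
    (T : (ι → ℝ) →L[ℝ] PiLp 1 fun _ : κ ↦ ℝ) (hT : ‖T‖ = 1)
    (h1 : (smoothVertices T 1).encard + 2 = 2 ^ Fintype.card ι)
    (hκ : (smoothVertices T (Fintype.card κ)).encard = 2)
    (hJ : ∀ x ∈ smoothVertices T 1, ∀ x' ∈ smoothVertices T 1,
      pm (suppFunctionals (T x)) = pm (suppFunctionals (T x'))) :
    finrank ℝ (Submodule.span ℝ (suppFunctionals T)) + 1 = Fintype.card ι + Fintype.card κ := by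
  have : Nonempty ι := Fintype.card_pos_iff.1 (by omega)
  have hκ1 : 1 ≠ Fintype.card κ := by
    intro h
    rw [← h] at hκ
    rw [hκ] at h1
    have h4 : 2 + 2 = 2 ^ Fintype.card ι := by exact_mod_cast h1
    have h8 : 2 ^ 3 ≤ 2 ^ Fintype.card ι := Nat.pow_le_pow_right two_pos hι
    omega
  obtain ⟨p, hp, hpair⟩ := exists_eq_pair_neg_of_encard_eq_two hκ
    (fun _ ↦ neg_mem_smoothVertices) fun h ↦ zero_notMem_cubeVertices h.1
  have hunion : smoothVertices T 1 ∪ {p, -p} = cubeVertices ι :=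
    hpair ▸ smoothVertices_union_eq_cubeVertices hκ1 (hκ ▸ h1)
  have hspan : Submodule.span ℝ (smoothVertices T 1) = ⊤ := by
    rw [eq_top_iff, ← span_cubeVertices_diff_eq_top hι hp.1, ← hunion, union_sdiff_right]
    exact Submodule.span_mono sdiff_subset
  have hne : (smoothVertices T 1).Nonempty :=
    nonempty_iff_ne_empty.2 fun h ↦ bot_ne_top (by rwa [h, Submodule.span_empty] at hspan)
  obtain ⟨f, hf, hJf⟩ := exists_forall_span_suppFunctionals_eq_span_singleton hne hJ
  have hJp : Submodule.span ℝ (suppFunctionals (T p)) = ⊤ :=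
    Submodule.eq_top_of_finrank_eq (hp.2.trans (finrank_dual_piLp κ).symm)
  have hball : convexHull ℝ (smoothVertices T 1 ∪ {p, -p}) = closedBall 0 1 := by
    rw [hunion, convexHull_cubeVertices]
  rw [finrank_span_suppFunctionals_add_one hT (finite_cubeVertices.subset (sep_subset _ _))
    hball hspan hf hJf hJp, finrank_fintype_fun_eq_card]

theorem stmt_17
    (T : Linf3 →L[ℝ] L13) (hT : ‖T‖ = 1)
    (hMT : MTExt T = {x₁, -x₁, x₂, -x₂, x₃, -x₃, x₄, -x₄})
    (h1 : (Sk T 1).encard = 6) (h2 : (Sk T 2).encard = 0)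
    (h3 : (Sk T 3).encard = 2)
    (hJ : ∀ xi ∈ Sk T 1, ∀ xj ∈ Sk T 1,
      pm (suppFunctionals (T xi)) = pm (suppFunctionals (T xj)))
    :
    finrank ℝ (Submodule.span ℝ (suppFunctionals T)) = 5 := by
  have hS : ∀ k, smoothVertices T k = Sk T k := fun k ↦ by
    rw [smoothVertices, Sk, hMT, cubeVertices_fin_three]
  simpa using stmt_17_general (by simp) T hT (by norm_num [hS, h1]) (by simp [hS, h3])
    (by simpa [hS] using hJ)
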